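/- Let f_1,…,f_{2d} ∈ S. The element (0, f_1·a_1 + ⋯ + f_{2d}·a_{2d}) of W belongs to the image ε(P′) of the commutator ideal P′ of P if and only if v_1 f_1 + ⋯ + v_{2d} f_{2d} = 0 in S. -/

import Mathlib

open MvPolynomial

namespace Stmt6

/-- Index type for `{1, …, 2d}`: the pair `(i, 0)` stands for the index `2i-1` and
`(i, 1)` for the index `2i`. -/
abbrev ι (d : ℕ) : Type := Fin d × Fin 2

/-- The free unital associative algebra `P = K⟨x_1, …, x_{2d}⟩`. -/
abbrev P (K : Type) [Field K] (d : ℕ) : Type := FreeAlgebra K (ι d)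

/-- The relation whose `RingQuot` is the free metabelian associative algebra
`F = P/T`. -/
def metaRel (K : Type) [Field K] (d : ℕ) : P K d → P K d → Prop := fun p q =>
  q = 0 ∧ ∃ a b c e : P K d, p = (a * b - b * a) * (c * e - e * c)

/-- The free metabelian associative algebra `F = P/T` of rank `2d`. -/
abbrev F (K : Type) [Field K] (d : ℕ) : Type := RingQuot (metaRel K d)

/-- The two-sided ideal `T = P'·P' ⊆ P` generated by all products of two commutators. -/
noncomputable def T (K : Type) [Field K] (d : ℕ) : TwoSidedIdeal (P K d) :=
  TwoSidedIdeal.span {p : P K d |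
    ∃ a b c e : P K d, p = (a * b - b * a) * (c * e - e * c)}

/-- The polynomial ring `R = K[y_1, …, y_{2d}]`. -/
abbrev R (K : Type) [Field K] (d : ℕ) : Type := MvPolynomial (ι d) K

/-- The polynomial ring `S = K[u_1, …, u_{2d}, v'_1, …, v'_{2d}]`; the variable
`X (Sum.inl j)` is `u_j` and `X (Sum.inr j)` is `v'_j`. -/
abbrev S (K : Type) [Field K] (d : ℕ) : Type := MvPolynomial (ι d ⊕ ι d) K

/-- The free `S`-module `M` with basis `a_1, …, a_{2d}`. -/
abbrev M (K : Type) [Field K] (d : ℕ) : Type := ι d → S K d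

variable (K : Type) [Field K] (d : ℕ)

/-- The basis element `a_j` of `M`. -/
noncomputable def a (j : ι d) : M K d := Pi.single j 1

/-- `y_j ↦ u_j`. -/
noncomputable def lam : R K d →ₐ[K] S K d :=
  MvPolynomial.rename (Sum.inl : ι d → ι d ⊕ ι d)

/-- `y_j ↦ v'_j`. -/
noncomputable def rho : R K d →ₐ[K] S K d :=
  MvPolynomial.rename (Sum.inr : ι d → ι d ⊕ ι d)

/-- The left `R`-action on `M`: `y_j` acts as scalar multiplication by `u_j`. -/
noncomputable instance : Module (R K d) (M K d) :=
  Module.compHom _ (lam K d).toRingHom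

/-- The right `R`-action on `M`: `y_j` acts as scalar multiplication by `v'_j`. -/
noncomputable instance : Module (R K d)ᵐᵒᵖ (M K d) :=
  Module.compHom _ (RingHom.fromOpposite (rho K d).toRingHom fun _ _ => mul_comm _ _)

instance : SMulCommClass (R K d) (R K d)ᵐᵒᵖ (M K d) := by
  constructor
  intro r r' m
  show lam K d r • (rho K d r'.unop • m) = rho K d r'.unop • (lam K d r • m)
  rw [smul_smul, smul_smul, mul_comm]

instance : IsScalarTower K (R K d) (M K d) := by
  constructor
  intro c r m
  show lam K d (c • r) • m = c • (lam K d r • m)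
  rw [map_smul]
  exact smul_assoc c (lam K d r) m

instance : IsScalarTower K (R K d)ᵐᵒᵖ (M K d) := by
  constructor
  intro c r m
  show rho K d (c • r).unop • m = c • (rho K d r.unop • m)
  rw [MulOpposite.unop_smul, map_smul]
  exact smul_assoc c (rho K d r.unop) m

/-- The wreath product `W = R ⋉ M`, the trivial square-zero extension of `R` by the
`R`-bimodule `M`. -/
noncomputable abbrev W : Type := TrivSqZeroExt (R K d) (M K d)

/-- The unique `K`-algebra homomorphism `ε : P → W` with `ε(x_j) = (y_j, a_j)`. -/
noncomputable def ε : P K d →ₐ[K] W K d :=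
  FreeAlgebra.lift K fun j =>
    TrivSqZeroExt.inl (MvPolynomial.X j) + TrivSqZeroExt.inr (a K d j)

/-- `u_j ∈ S`. -/
noncomputable def u (j : ι d) : S K d := X (Sum.inl j)

/-- `v_j = v'_j - u_j ∈ S`. -/
noncomputable def v (j : ι d) : S K d := X (Sum.inr j) - X (Sum.inl j)

/-- The commutator ideal `P'` of `P`: the two-sided ideal generated by all commutators
`[a,b] = ab - ba`. -/
noncomputable def P' : TwoSidedIdeal (P K d) :=
  TwoSidedIdeal.span {p : P K d | ∃ a b : P K d, p = a * b - b * a}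

lemma lam_X (j : ι d) : lam K d (X j) = X (Sum.inl j) := by simp [lam]
lemma rho_X (j : ι d) : rho K d (X j) = X (Sum.inr j) := by simp [rho]

lemma left_smul (r : R K d) (m : M K d) : r • m = lam K d r • m := rfl
lemma right_smul (r : R K d) (m : M K d) : MulOpposite.op r • m = rho K d r • m := rfl

/-- The map `m ↦ Σ v_j m_j`. -/
noncomputable def phi : M K d →ₗ[S K d] S K d :=
  ∑ j : ι d, v K d j • LinearMap.proj j

lemma phi_apply (m : M K d) : phi K d m = ∑ j : ι d, v K d j * m j := by
  simp [phi]

lemma phi_a (j : ι d) : phi K d (a K d j) = v K d j := by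
  simp [phi_apply, a, Pi.single_apply]

lemma sum_a (f : ι d → S K d) : ∑ j : ι d, f j • a K d j = f := by
  ext1 i
  simp [a, Pi.single_apply, Finset.sum_apply]

lemma phi_eps (p : P K d) :
    phi K d (ε K d p).snd = rho K d (ε K d p).fst - lam K d (ε K d p).fst := by
  induction p using FreeAlgebra.induction with
  | grade0 r =>
    rw [AlgHom.commutes, TrivSqZeroExt.algebraMap_eq_inl']
    simp [lam, rho]
  | grade1 x =>
    simp only [ε, FreeAlgebra.lift_ι_apply, TrivSqZeroExt.snd_add, TrivSqZeroExt.snd_inl,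
      TrivSqZeroExt.snd_inr, zero_add, TrivSqZeroExt.fst_add, TrivSqZeroExt.fst_inl,
      TrivSqZeroExt.fst_inr, add_zero, lam_X, rho_X, phi_a, v]
  | mul p q hp hq =>
    rw [map_mul, TrivSqZeroExt.snd_mul, TrivSqZeroExt.fst_mul, map_add, left_smul, right_smul,
      map_smul, map_smul, hp, hq, map_mul, map_mul, smul_eq_mul, smul_eq_mul]
    ring
  | add p q hp hq =>
    rw [map_add, TrivSqZeroExt.snd_add, TrivSqZeroExt.fst_add, map_add, hp, hq, map_add, map_add]
    ring

/-- The `m` with `(0, m)` in the image of `P'`. -/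
def InQ (m : M K d) : Prop := ∃ p ∈ P' K d, ε K d p = TrivSqZeroExt.inr m

variable {K d}

lemma InQ.add {m n : M K d} (hm : InQ K d m) (hn : InQ K d n) : InQ K d (m + n) := by
  obtain ⟨p, hp, h1⟩ := hm
  obtain ⟨q, hq, h2⟩ := hn
  exact ⟨p + q, (P' K d).add_mem hp hq, by rw [map_add, h1, h2, TrivSqZeroExt.inr_add]⟩

lemma InQ.smul (s : S K d) : ∀ {m : M K d}, InQ K d m → InQ K d (s • m) := by
  induction s using MvPolynomial.induction_on with
  | C c =>
    rintro m ⟨p, hp, h⟩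
    refine ⟨algebraMap K _ c * p, (P' K d).mul_mem_left _ _ hp, ?_⟩
    rw [map_mul, AlgHom.commutes, h, TrivSqZeroExt.algebraMap_eq_inl',
      TrivSqZeroExt.inl_mul_inr, left_smul]
    simp [lam, MvPolynomial.algebraMap_eq]
  | add p q hp hq =>
    intro m hm
    rw [add_smul]
    exact (hp hm).add (hq hm)
  | mul_X s j hs =>
    intro m hm
    rw [mul_smul]
    apply hs
    obtain ⟨p, hp, h⟩ := hm
    cases j with
    | inl j =>
      refine ⟨FreeAlgebra.ι K j * p, (P' K d).mul_mem_left _ _ hp, ?_⟩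
      rw [map_mul, h, ε, FreeAlgebra.lift_ι_apply, add_mul, TrivSqZeroExt.inl_mul_inr,
        TrivSqZeroExt.inr_mul_inr, add_zero, left_smul, lam_X]
    | inr j =>
      refine ⟨p * FreeAlgebra.ι K j, (P' K d).mul_mem_right _ _ hp, ?_⟩
      rw [map_mul, h, ε, FreeAlgebra.lift_ι_apply, mul_add, TrivSqZeroExt.inr_mul_inl,
        TrivSqZeroExt.inr_mul_inr, add_zero, right_smul, rho_X]

lemma InQ.zero : InQ K d 0 := ⟨0, (P' K d).zero_mem, by simp⟩

lemma InQ.koszul (i j : ι d) : InQ K d (v K d i • a K d j - v K d j • a K d i) := by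
  refine ⟨FreeAlgebra.ι K j * FreeAlgebra.ι K i - FreeAlgebra.ι K i * FreeAlgebra.ι K j,
    TwoSidedIdeal.subset_span ⟨_, _, rfl⟩, ?_⟩
  simp only [map_sub, map_mul, ε, FreeAlgebra.lift_ι_apply]
  apply TrivSqZeroExt.ext
  · simp [mul_comm]
  · simp only [TrivSqZeroExt.snd_sub, TrivSqZeroExt.snd_mul, TrivSqZeroExt.snd_add,
      TrivSqZeroExt.snd_inl,
      TrivSqZeroExt.snd_inr, zero_add, TrivSqZeroExt.fst_add, TrivSqZeroExt.fst_inl,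
      TrivSqZeroExt.fst_inr, add_zero, left_smul, right_smul, lam_X, rho_X, v, sub_smul]
    abel

open Classical in
/-- Substitute `v'_i ↦ u_i` for `i ∈ s`. -/
noncomputable def sig (s : Finset (ι d)) : S K d →ₐ[K] S K d :=
  aeval (Sum.elim (fun i => X (Sum.inl i))
    (fun i => if i ∈ s then X (Sum.inl i) else X (Sum.inr i)))

lemma sig_v_mem {s : Finset (ι d)} {i : ι d} (h : i ∈ s) : sig s (v K d i) = 0 := by
  simp [sig, v, h]

lemma sig_v_not_mem {s : Finset (ι d)} {i : ι d} (h : i ∉ s) : sig s (v K d i) = v K d i := by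
  simp [sig, v, h]

lemma v_ne (i : ι d) : v K d i ≠ 0 := by
  rw [v, sub_ne_zero]
  intro h
  have := MvPolynomial.X_injective h
  cases this

lemma sub_sig_mem (s : Finset (ι d)) (g : S K d) :
    g - sig s g ∈ Ideal.span ((v K d) '' (s : Set (ι d))) := by
  induction g using MvPolynomial.induction_on with
  | C c => simp [sig, MvPolynomial.algebraMap_eq]
  | add p q hp hq =>
    have := Ideal.add_mem _ hp hq
    rw [map_add]
    convert this using 1
    ring
  | mul_X p j hp =>
    have hX : X j - sig s (X j) ∈ Ideal.span ((v K d) '' (s : Set (ι d))) := by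
      cases j with
      | inl j => simp [sig]
      | inr j =>
        by_cases h : j ∈ s
        · have : (X (Sum.inr j) - sig s (X (Sum.inr j)) : S K d) = v K d j := by
            simp [sig, h, v]
          rw [this]
          exact Ideal.subset_span ⟨j, h, rfl⟩
        · simp [sig, h]
    have := Ideal.add_mem _ (Ideal.mul_mem_right (X j) _ hp) (Ideal.mul_mem_left _ (sig s p) hX)
    rw [map_mul]
    convert this using 1
    ring

lemma exact_aux (s : Finset (ι d)) : ∀ f : M K d, (∀ i ∉ s, f i = 0) → phi K d f = 0 →
    InQ K d f := by
  classical
  induction s using Finset.induction_on with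
  | empty =>
    intro f hf _
    have : f = 0 := funext fun i => hf i (by simp)
    rw [this]
    exact InQ.zero
  | insert j s hj ih =>
    intro f hf h0
    have h1 : v K d j * sig s (f j) = 0 := by
      have h2 := congrArg (sig s) h0
      rw [phi_apply, map_sum, map_zero, Finset.sum_eq_single j] at h2
      · rwa [map_mul, sig_v_not_mem hj] at h2
      · intro i _ hij
        rw [map_mul]
        by_cases his : i ∈ s
        · rw [sig_v_mem his, zero_mul]
        · rw [hf i (by simp [hij, his]), map_zero, mul_zero]
      · simp
    have h3 := (mul_eq_zero.mp h1).resolve_left (v_ne j)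
    have h4 := sub_sig_mem s (f j)
    rw [h3, sub_zero] at h4
    obtain ⟨c, hc⟩ : ∃ c : ι d → S K d, ∑ i ∈ s, c i • v K d i = f j := by
      obtain ⟨c, hc⟩ := (Submodule.mem_span_image_finset_iff_exists_fun _).mp h4
      refine ⟨fun i => if h : i ∈ s then c ⟨i, h⟩ else 0, ?_⟩
      rw [← hc, ← Finset.sum_coe_sort s]
      exact Finset.sum_congr rfl fun i _ => by simp
    set k : M K d := ∑ i ∈ s, c i • (v K d i • a K d j - v K d j • a K d i) with hk
    have hkQ : InQ K d k := by
      rw [hk]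
      exact Finset.sum_induction _ (InQ K d) (fun _ _ => InQ.add) InQ.zero
        (fun i _ => (InQ.koszul i j).smul (c i))
    have hkphi : phi K d k = 0 := by
      rw [hk, map_sum]
      refine Finset.sum_eq_zero fun i _ => ?_
      rw [map_smul, map_sub, map_smul, map_smul, phi_a, phi_a]
      simp [mul_comm]
    have hfk : InQ K d (f - k) := by
      apply ih
      · intro i hi
        have hki : k i = ∑ l ∈ s, c l * (v K d l * a K d j i) := by
          rw [hk, Finset.sum_apply]
          refine Finset.sum_congr rfl fun l hl => ?_
          have : i ≠ l := fun h => hi (h ▸ hl)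
          simp [a, Pi.single_apply, this]
        rw [Pi.sub_apply, hki]
        by_cases hij : i = j
        · subst hij
          rw [← hc]
          simp [a]
        · rw [hf i (by simp [hij, hi])]
          simp [a, Pi.single_apply, hij]
      · rw [map_sub, h0, hkphi, sub_zero]
    have := hfk.add hkQ
    rwa [sub_add_cancel] at this

variable (K d)

/-- For `f_1, …, f_{2d} ∈ S`, the element `(0, f_1·a_1 + ⋯ + f_{2d}·a_{2d})` of `W`
belongs to `ε(P')` if and only if `v_1 f_1 + ⋯ + v_{2d} f_{2d} = 0` in `S`. -/
theorem stmt6 [CharZero K] (hd : 1 ≤ d) (f : ι d → S K d) :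
    (∃ p ∈ P' K d, ε K d p = TrivSqZeroExt.inr (∑ j : ι d, f j • a K d j)) ↔
      ∑ j : ι d, v K d j * f j = 0 := by
  rw [sum_a]
  constructor
  · rintro ⟨p, _, h⟩
    have := phi_eps K d p
    rw [h] at this
    simpa [phi_apply] using this
  · intro h
    exact exact_aux Finset.univ f (by simp) (by rw [phi_apply]; exact h)

end Stmt6
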